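/- For every integer k ≥ 3 and every positive integer n (of either parity), the number of alternating permutations of length n avoiding 12⋯k equals the number of alternating permutations of length n avoiding 213⋯k. -/

import Mathlib

open Function

def Contains {n k : ℕ} (p : Fin n → Fin n) (q : Fin k → Fin k) : Prop :=
  ∃ f : Fin k → Fin n, StrictMono f ∧ ∀ a b : Fin k, q a < q b ↔ p (f a) < p (f b)

def Avoids {n k : ℕ} (p : Fin n → Fin n) (q : Fin k → Fin k) : Prop :=
  ¬ Contains p q

noncomputable def rank {n : ℕ} (p : Fin n → Fin n) (i : Fin n) : ℕ :=
  sSup {m | ∃ f : Fin m → Fin n, StrictMono f ∧ StrictMono (p ∘ f) ∧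
    ∃ hm : 0 < m, f ⟨m - 1, Nat.sub_lt hm Nat.one_pos⟩ = i}

noncomputable def corank {n : ℕ} (p : Fin n → Fin n) (i : Fin n) : ℕ :=
  sSup {m | ∃ f : Fin m → Fin n, StrictMono f ∧ StrictMono (p ∘ f) ∧
    ∃ hm : 0 < m, f ⟨0, hm⟩ = i}

def Alternating {n : ℕ} (p : Fin n → Fin n) : Prop :=
  ∀ (i : ℕ) (h : i + 1 < n), p ⟨i, by omega⟩ < p ⟨i + 1, h⟩ ↔ i % 2 = 0

def IsPeak {n : ℕ} (p : Fin n → Fin n) (i : Fin n) : Prop :=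
  (∀ _ : 0 < i.1, p ⟨i.1 - 1, lt_of_le_of_lt (Nat.sub_le _ _) i.2⟩ < p i) ∧
  (∀ h : i.1 + 1 < n, p ⟨i.1 + 1, h⟩ < p i)

def IsValley {n : ℕ} (p : Fin n → Fin n) (i : Fin n) : Prop :=
  (∀ _ : 0 < i.1, p i < p ⟨i.1 - 1, lt_of_le_of_lt (Nat.sub_le _ _) i.2⟩) ∧
  (∀ h : i.1 + 1 < n, p i < p ⟨i.1 + 1, h⟩)

def Wh {n : ℕ} (m : ℕ) (p : Fin n → Fin n) (c v : Fin n) : Prop :=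
  ∃ g : Fin m → Fin n, StrictMono g ∧ StrictMono (p ∘ g) ∧ ∀ j, c < g j ∧ v < p (g j)

def Rl {n : ℕ} (m : ℕ) (p q : Fin n → Fin n) : Prop :=
  ∀ i, q i = p i ∨ (Wh m p i (p i) ∧ Wh m p i (q i))

theorem Wh.down {n m : ℕ} {p : Fin n → Fin n} {c v c' v' : Fin n} (h : Wh m p c v)
    (hc : c' ≤ c) (hv : v' ≤ v) : Wh m p c' v' := by
  obtain ⟨g, h1, h2, h3⟩ := h
  exact ⟨g, h1, h2, fun j => ⟨lt_of_le_of_lt hc (h3 j).1, lt_of_le_of_lt hv (h3 j).2⟩⟩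

theorem Wh.strong {n m : ℕ} {p : Fin n → Fin n} : ∀ (N : ℕ) (c v : Fin n), n - c.1 ≤ N →
    Wh m p c v → ∃ g : Fin m → Fin n, StrictMono g ∧ StrictMono (p ∘ g) ∧
      (∀ j, c < g j ∧ v < p (g j)) ∧ ∀ j, ¬ Wh m p (g j) (p (g j)) := by
  intro N
  induction N with
  | zero => intro c v hN _; have := c.2; omega
  | succ N ih =>
    intro c v hN h
    obtain ⟨g, h1, h2, h3⟩ := h
    by_cases hw : ∃ j, Wh m p (g j) (p (g j))
    · obtain ⟨j, hj⟩ := hw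
      have hl := (h3 j).1
      obtain ⟨g', a1, a2, a3, a4⟩ := ih (g j) (p (g j)) (by
        have := (g j).2
        rw [Fin.lt_def] at hl
        omega) hj
      exact ⟨g', a1, a2, fun i => ⟨(h3 j).1.trans (a3 i).1, (h3 j).2.trans (a3 i).2⟩, a4⟩
    · push Not at hw
      exact ⟨g, h1, h2, h3, hw⟩

theorem Rl.wh {n m : ℕ} {p q : Fin n → Fin n} (h : Rl m p q) (c v : Fin n) :
    Wh m q c v ↔ Wh m p c v := by
  constructor
  · rintro ⟨g, h1, h2, h3⟩
    by_cases hw : ∃ j, Wh m p (g j) (q (g j))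
    · obtain ⟨j, hj⟩ := hw
      exact hj.down (h3 j).1.le (h3 j).2.le
    · push Not at hw
      have he : ∀ j, q (g j) = p (g j) := fun j => (h (g j)).resolve_right fun h' => hw j h'.2
      refine ⟨g, h1, ?_, fun j => ⟨(h3 j).1, he j ▸ (h3 j).2⟩⟩
      intro a b hab
      have := h2 hab
      simpa [he] using this
  · intro hw
    obtain ⟨g, h1, h2, h3, h4⟩ := hw.strong _ _ _ le_rfl
    have he : ∀ j, q (g j) = p (g j) := fun j => (h (g j)).resolve_right fun h' => h4 j h'.1
    refine ⟨g, h1, ?_, fun j => ⟨(h3 j).1, (he j).symm ▸ (h3 j).2⟩⟩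
    intro a b hab
    have := h2 hab
    simpa [he] using this

theorem Rl.refl {n m : ℕ} (p : Fin n → Fin n) : Rl m p p := fun _ => Or.inl rfl

theorem Rl.symm {n m : ℕ} {p q : Fin n → Fin n} (h : Rl m p q) : Rl m q p := by
  intro i
  rw [h.wh, h.wh]
  rcases h i with h | h
  · exact Or.inl h.symm
  · exact Or.inr ⟨h.2, h.1⟩

theorem Rl.trans {n m : ℕ} {p q r : Fin n → Fin n} (h : Rl m p q) (h' : Rl m q r) :
    Rl m p r := by
  intro i
  have h2 := h' i
  rw [h.wh, h.wh] at h2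
  rcases h i with h | h
  · rwa [h] at h2
  · rcases h2 with h2 | h2
    · right; rw [h2]; exact h
    · exact Or.inr ⟨h.1, h2.2⟩

def C12 {n : ℕ} (m : ℕ) (p : Fin n → Fin n) : Prop :=
  ∃ a b, a < b ∧ p a < p b ∧ Wh m p b (p b)

def C21 {n : ℕ} (m : ℕ) (p : Fin n → Fin n) : Prop :=
  ∃ a b, a < b ∧ p b < p a ∧ Wh m p b (p a)

def Gd {n : ℕ} (m : ℕ) (p : Fin n → Fin n) : Prop :=
  ∀ i : Fin n, i.1 % 2 = 1 → ¬ Wh m p i (p i)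

theorem strictMono_cons2 {n m : ℕ} {a b : Fin n} {g : Fin m → Fin n} (hab : a < b)
    (hg : StrictMono g) (hb : ∀ j, b < g j) :
    StrictMono (Fin.cons a (Fin.cons b g : Fin (m+1) → Fin n) : Fin (m+2) → Fin n) := by
  intro x y hxy
  induction x using Fin.cases with
  | zero =>
    induction y using Fin.cases with
    | zero => exact absurd hxy (lt_irrefl _)
    | succ y =>
      induction y using Fin.cases with
      | zero => simpa using hab
      | succ y => simpa using hab.trans (hb y)
  | succ x =>
    induction y using Fin.cases with
    | zero => exact absurd hxy (by simp)
    | succ y =>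
      induction x using Fin.cases with
      | zero =>
        induction y using Fin.cases with
        | zero => exact absurd hxy (lt_irrefl _)
        | succ y => simpa using hb y
      | succ x =>
        induction y using Fin.cases with
        | zero => exact absurd hxy (by simp)
        | succ y => simpa using hg (by simpa using hxy)

theorem contains12 {n m : ℕ} (p : Fin n → Fin n) :
    Contains p (id : Fin (m+2) → Fin (m+2)) ↔ C12 m p := by
  constructor
  · rintro ⟨f, h1, h2⟩
    refine ⟨f 0, f 1, h1 (by simp), (h2 0 1).1 (by simp), fun j => f j.succ.succ, ?_, ?_, ?_⟩
    · intro a b hab; exact h1 (by simpa using hab)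
    · intro a b hab; exact (h2 _ _).1 (by simpa using hab)
    · intro j
      have : (1 : Fin (m+2)) < j.succ.succ := by
        rw [Fin.lt_def]; simp
      exact ⟨h1 this, (h2 _ _).1 this⟩
  · rintro ⟨a, b, hab, hp, g, h1, h2, h3⟩
    refine ⟨_, strictMono_cons2 hab h1 (fun j => (h3 j).1), ?_⟩
    have hm : StrictMono (p ∘ (Fin.cons a (Fin.cons b g : Fin (m+1) → Fin n) :
        Fin (m+2) → Fin n)) := by
      have := strictMono_cons2 hp h2 (fun j => (h3 j).2)
      convert this using 1
      funext x
      induction x using Fin.cases with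
      | zero => rfl
      | succ x =>
        induction x using Fin.cases with
        | zero => rfl
        | succ x => rfl
    intro x y
    exact hm.lt_iff_lt.symm

theorem swap_fix {m : ℕ} (j : Fin m) :
    Equiv.swap (0 : Fin (m+2)) 1 j.succ.succ = j.succ.succ := by
  apply Equiv.swap_apply_of_ne_of_ne
  · exact Fin.succ_ne_zero _
  · intro h
    have := congrArg Fin.val h
    simp at this

theorem contains21 {n m : ℕ} (p : Fin n → Fin n) :
    Contains p ⇑(Equiv.swap (0 : Fin (m+2)) 1) ↔ C21 m p := by
  constructor
  · rintro ⟨f, h1, h2⟩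
    refine ⟨f 0, f 1, h1 (by simp), (h2 1 0).1 (by simp), fun j => f j.succ.succ, ?_, ?_, ?_⟩
    · intro a b hab; exact h1 (by simpa using hab)
    · intro a b hab; exact (h2 _ _).1 (by simpa [swap_fix] using hab)
    · intro j
      have : (1 : Fin (m+2)) < j.succ.succ := by
        rw [Fin.lt_def]; simp
      exact ⟨h1 this, (h2 _ _).1 (by rw [swap_fix, Equiv.swap_apply_left]; exact this)⟩
  · rintro ⟨a, b, hab, hp, g, h1, h2, h3⟩
    refine ⟨_, strictMono_cons2 hab h1 (fun j => (h3 j).1), ?_⟩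
    have hm : StrictMono (p ∘ (Fin.cons b (Fin.cons a g : Fin (m+1) → Fin n) :
        Fin (m+2) → Fin n)) := by
      have := strictMono_cons2 hp h2 (fun j => (h3 j).2)
      convert this using 1
      funext x
      induction x using Fin.cases with
      | zero => rfl
      | succ x =>
        induction x using Fin.cases with
        | zero => rfl
        | succ x => rfl
    have key : ∀ x, (Fin.cons a (Fin.cons b g : Fin (m+1) → Fin n) : Fin (m+2) → Fin n) x =
        (Fin.cons b (Fin.cons a g : Fin (m+1) → Fin n) : Fin (m+2) → Fin n)
          (Equiv.swap 0 1 x) := by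
      intro x
      induction x using Fin.cases with
      | zero => rw [Equiv.swap_apply_left]; rfl
      | succ x =>
        induction x using Fin.cases with
        | zero =>
          have : (Fin.succ 0 : Fin (m+2)) = 1 := rfl
          rw [this, Equiv.swap_apply_right]; rfl
        | succ x => rw [swap_fix]; rfl
    intro x y
    rw [key, key]
    exact hm.lt_iff_lt.symm

theorem gd12 {n m : ℕ} {p : Fin n → Fin n} (ha : Alternating p) (h : ¬ C12 m p) : Gd m p := by
  intro i hi hw
  have hi2 := i.2
  have h1 := (ha (i.1 - 1) (by omega)).2 (by omega)
  have e : (⟨i.1 - 1 + 1, by omega⟩ : Fin n) = i := Fin.ext (by simp; omega)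
  rw [e] at h1
  exact h ⟨_, i, by rw [Fin.lt_def]; simp; omega, h1, hw⟩

theorem gd21 {n m : ℕ} {p : Fin n → Fin n} (hm : 0 < m) (hb : Bijective p)
    (ha : Alternating p) (h : ¬ C21 m p) : Gd m p := by
  intro i hi ⟨g, h1, h2, h3⟩
  have hl : i.1 + 1 < n := by
    have := (h3 ⟨0, hm⟩).1
    have h' := (g ⟨0, hm⟩).2
    rw [Fin.lt_def] at this
    omega
  have hlt : p ⟨i.1 + 1, hl⟩ < p i := by
    have := (not_congr (ha i.1 hl)).2 (by omega)
    refine lt_of_le_of_ne (not_lt.1 this) fun he => ?_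
    have := congrArg Fin.val (hb.1 he)
    simp at this
  refine h ⟨i, ⟨i.1 + 1, hl⟩, by rw [Fin.lt_def]; simp, hlt, g, h1, h2, fun j => ⟨?_, (h3 j).2⟩⟩
  have := (h3 j).1
  refine lt_of_le_of_ne ?_ fun he => ?_
  · rw [Fin.lt_def] at this; rw [Fin.le_def]; exact this
  · have h' := (h3 j).2
    rw [← he] at h'
    exact lt_asymm h' hlt

theorem Rl.alt {n m : ℕ} {p q : Fin n → Fin n} (h : Rl m p q) (hg : Gd m p)
    (ha : Alternating p) : Alternating q := by
  intro i hi
  have ha' := ha i hi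
  rcases Nat.mod_two_eq_zero_or_one i with h0 | h0
  · have hw := hg ⟨i+1, hi⟩ (by simp; omega)
    have e1 : q ⟨i+1, hi⟩ = p ⟨i+1, hi⟩ := (h _).resolve_right fun h' => hw h'.1
    rw [e1]
    refine ⟨fun _ => h0, fun _ => ?_⟩
    rcases h ⟨i, by omega⟩ with e | ⟨-, g, h1, h2, h3⟩
    · rw [e]; exact ha'.2 h0
    · by_contra hc
      push Not at hc
      refine hw ⟨g, h1, h2, fun j => ⟨?_, lt_of_le_of_lt hc (h3 j).2⟩⟩
      have := (h3 j).1
      refine lt_of_le_of_ne ?_ fun he => ?_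
      · rw [Fin.lt_def] at this; rw [Fin.le_def]; exact this
      · have h' := (h3 j).2
        rw [← he] at h'
        exact absurd h' (not_lt.2 hc)
  · have hw := hg ⟨i, by omega⟩ h0
    have e1 : q ⟨i, by omega⟩ = p ⟨i, by omega⟩ := (h _).resolve_right fun h' => hw h'.1
    rw [e1]
    refine ⟨fun hlt => ?_, fun h => by omega⟩
    rcases h ⟨i+1, hi⟩ with e | ⟨-, h'⟩
    · rw [e] at hlt; exact ha'.1 hlt
    · exact absurd (h'.down (by rw [Fin.le_def]; simp) hlt.le) hw

theorem Rl.swap {n m : ℕ} {p : Fin n → Fin n} {a b : Fin n} (h1 : Wh m p a (p a))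
    (h2 : Wh m p b (p b)) (h3 : Wh m p a (p b)) (h4 : Wh m p b (p a)) :
    Rl m p (p ∘ Equiv.swap a b) := by
  intro i
  by_cases ha : i = a
  · subst ha; right; simp; exact ⟨h1, h3⟩
  by_cases hb : i = b
  · subst hb; right; simp; exact ⟨h2, h4⟩
  left
  simp [Equiv.swap_apply_of_ne_of_ne ha hb]

theorem ex12 {n : ℕ} (m : ℕ) (p : Fin n → Fin n) (hb : Bijective p) :
    ∃ q, Bijective q ∧ Rl m p q ∧ ¬ C12 m q := by
  obtain ⟨q, ⟨hq1, hq2⟩, hq⟩ := Set.exists_max_image {q : Fin n → Fin n | Bijective q ∧ Rl m p q}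
    (fun q => toLex q) (Set.toFinite _) ⟨p, hb, Rl.refl p⟩
  refine ⟨q, hq1, hq2, ?_⟩
  rintro ⟨a, b, hab, hlt, hw⟩
  have hr : Rl m q (q ∘ Equiv.swap a b) := Rl.swap (hw.down hab.le hlt.le) hw
    (hw.down hab.le le_rfl) (hw.down le_rfl hlt.le)
  refine absurd (hq _ ⟨hq1.comp (Equiv.swap a b).bijective, hq2.trans hr⟩) (not_le.2 ?_)
  refine ⟨a, fun j hj => ?_, ?_⟩
  · simp [Equiv.swap_apply_of_ne_of_ne hj.ne (hj.trans hab).ne]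
  · simpa using hlt

theorem ex21 {n : ℕ} (m : ℕ) (p : Fin n → Fin n) (hb : Bijective p) :
    ∃ q, Bijective q ∧ Rl m p q ∧ ¬ C21 m q := by
  obtain ⟨q, ⟨hq1, hq2⟩, hq⟩ := Set.exists_min_image {q : Fin n → Fin n | Bijective q ∧ Rl m p q}
    (fun q => toLex q) (Set.toFinite _) ⟨p, hb, Rl.refl p⟩
  refine ⟨q, hq1, hq2, ?_⟩
  rintro ⟨a, b, hab, hlt, hw⟩
  have hr : Rl m q (q ∘ Equiv.swap a b) := Rl.swap (hw.down hab.le le_rfl)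
    (hw.down le_rfl hlt.le) (hw.down hab.le hlt.le) hw
  refine absurd (hq _ ⟨hq1.comp (Equiv.swap a b).bijective, hq2.trans hr⟩) (not_le.2 ?_)
  refine ⟨a, fun j hj => ?_, ?_⟩
  · simp [Equiv.swap_apply_of_ne_of_ne hj.ne (hj.trans hab).ne]
  · simpa using hlt

theorem last_diff {n : ℕ} {p q : Fin n → Fin n} (h : p ≠ q) :
    ∃ b, p b ≠ q b ∧ ∀ i, b < i → p i = q i := by
  obtain ⟨i, hi⟩ := Function.ne_iff.1 h
  obtain ⟨b, hb, hm⟩ := Set.exists_max_image {i | p i ≠ q i} id (Set.toFinite _) ⟨i, hi⟩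
  refine ⟨b, hb, fun j hj => ?_⟩
  by_contra hne
  exact absurd (hm j hne) (not_le.2 hj)

theorem pre {n : ℕ} {p q : Fin n → Fin n} (hp : Bijective p) (hq : Bijective q) {b : Fin n}
    (hne : p b ≠ q b) (h : ∀ i, b < i → p i = q i) : ∃ a, a < b ∧ p a = q b := by
  obtain ⟨a, ha⟩ := hp.2 (q b)
  refine ⟨a, ?_, ha⟩
  rcases lt_trichotomy a b with h' | h' | h'
  · exact h'
  · subst h'; exact absurd ha hne
  · rw [h a h'] at ha
    exact absurd (hq.1 ha) h'.ne'

theorem un12 {n m : ℕ} {p q : Fin n → Fin n} (hp : Bijective p) (hq : Bijective q)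
    (h : Rl m p q) (h1 : ¬ C12 m p) (h2 : ¬ C12 m q) : p = q := by
  by_contra hne
  obtain ⟨b, hb, hm⟩ := last_diff hne
  rcases lt_or_gt_of_ne hb with hlt | hlt
  · obtain ⟨a, hab, ha⟩ := pre hq hp hb.symm (fun i hi => (hm i hi).symm)
    exact h2 ⟨a, b, hab, ha ▸ hlt, ((h.symm b).resolve_left hb).1⟩
  · obtain ⟨a, hab, ha⟩ := pre hp hq hb hm
    exact h1 ⟨a, b, hab, ha ▸ hlt, ((h b).resolve_left hb.symm).1⟩

theorem un21 {n m : ℕ} {p q : Fin n → Fin n} (hp : Bijective p) (hq : Bijective q)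
    (h : Rl m p q) (h1 : ¬ C21 m p) (h2 : ¬ C21 m q) : p = q := by
  by_contra hne
  obtain ⟨b, hb, hm⟩ := last_diff hne
  rcases lt_or_gt_of_ne hb with hlt | hlt
  · obtain ⟨a, hab, ha⟩ := pre hp hq hb hm
    exact h1 ⟨a, b, hab, ha ▸ hlt, ha ▸ ((h b).resolve_left hb.symm).2⟩
  · obtain ⟨a, hab, ha⟩ := pre hq hp hb.symm (fun i hi => (hm i hi).symm)
    exact h2 ⟨a, b, hab, ha ▸ hlt, ha ▸ ((h.symm b).resolve_left hb).2⟩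

theorem main_aux (m n : ℕ) (hm : 0 < m) :
    Nat.card {p : Fin n → Fin n // Bijective p ∧ Alternating p ∧ ¬ C12 m p} =
    Nat.card {p : Fin n → Fin n // Bijective p ∧ Alternating p ∧ ¬ C21 m p} := by
  have hex : ∀ p : {p : Fin n → Fin n // Bijective p ∧ Alternating p ∧ ¬ C12 m p},
      ∃ q : {p : Fin n → Fin n // Bijective p ∧ Alternating p ∧ ¬ C21 m p}, Rl m p.1 q.1 := by
    rintro ⟨p, hp, ha, hc⟩
    obtain ⟨q, h1, h2, h3⟩ := ex21 m p hp
    exact ⟨⟨q, h1, h2.alt (gd12 ha hc) ha, h3⟩, h2⟩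
  choose f hf using hex
  refine Nat.card_congr (Equiv.ofBijective f ⟨?_, ?_⟩)
  · intro p p' he
    have h' := hf p'
    rw [← he] at h'
    exact Subtype.ext (un12 p.2.1 p'.2.1 ((hf p).trans h'.symm) p.2.2.2 p'.2.2.2)
  · rintro ⟨q, hq, ha, hc⟩
    obtain ⟨p, h1, h2, h3⟩ := ex12 m q hq
    refine ⟨⟨p, h1, h2.alt (gd21 hm hq ha hc) ha, h3⟩, Subtype.ext ?_⟩
    exact (un21 hq (f _).2.1 (h2.trans (hf ⟨p, _⟩)) hc (f _).2.2.2).symm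

theorem stmt14 (k n : ℕ) (hk : 3 ≤ k) (hn : 0 < n) :
    Nat.card {p : Fin n → Fin n // Function.Bijective p ∧ Alternating p ∧
      Avoids p (id : Fin k → Fin k)} =
    Nat.card {p : Fin n → Fin n // Function.Bijective p ∧ Alternating p ∧
      Avoids p ⇑(Equiv.swap (⟨0, by omega⟩ : Fin k) ⟨1, by omega⟩)} := by 
  obtain ⟨m, rfl⟩ : ∃ m, k = m + 2 := ⟨k - 2, by omega⟩
  have h := main_aux m n (by omega)
  simp only [← contains12, ← contains21] at h
  exact h
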